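/- (Transversality conditions, unconstrained case.) Let 0 < α ≤ 1 and β > 0, and let φ : ℝⁿ×ℝⁿ → ℝ and L : ℝⁿ×ℝⁿ×[a,b] → ℝ be of class C². For (u',y') ∈ L^∞([a,b],ℝⁿ)×ℝⁿ set x(t,u',y') := y' + ∫_a^t ((t−s)^{α−1}/Γ(α)) u'(s) ds and 𝓛(u',y') := φ(y', x(b,u',y')) + ∫_a^b ((b−s)^{β−1}/Γ(β)) L( x(s,u',y'), u'(s), s ) ds. Suppose (u,y) ∈ L^∞([a,b],ℝⁿ)×ℝⁿ satisfies 𝓛(u,y) ≤ 𝓛(u',y') for all (u',y') ∈ L^∞([a,b],ℝⁿ)×ℝⁿ, and write x := x(·,u,y) and p̃(s) := ((b−s)^{β−1}/Γ(β)) ∂₂L(x(s),u(s),s). Then there exists an absolutely continuous function q : [a,b] → ℝⁿ with q(t) = ∫_t^b ((s−t)^{−α}/Γ(1−α)) p̃(s) ds for almost every t ∈ [a,b] when α < 1 (and q(t) = p̃(t) for almost every t when α = 1), such that q(a) = ∂₁φ(x(a),x(b)) and −q(b) = ∂₂φ(x(a),x(b)). -/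

import Mathlib

open MeasureTheory Set
open scoped RealInnerProductSpace

/-- The trajectory `x(·,u,y)` associated with a Caputo fractional derivative `u`
of order `α` and initial condition `y`. -/
noncomputable def traj (n : ℕ) (a α : ℝ) (u : ℝ → EuclideanSpace ℝ (Fin n))
    (y : EuclideanSpace ℝ (Fin n)) (t : ℝ) : EuclideanSpace ℝ (Fin n) :=
  y + ∫ s in a..t, ((t - s) ^ (α - 1) / Real.Gamma α) • u s

/-- The Bolza functional. -/
noncomputable def bolza (n : ℕ) (a b α β : ℝ)
    (φ : EuclideanSpace ℝ (Fin n) × EuclideanSpace ℝ (Fin n) → ℝ)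
    (L : EuclideanSpace ℝ (Fin n) × EuclideanSpace ℝ (Fin n) × ℝ → ℝ)
    (u : ℝ → EuclideanSpace ℝ (Fin n)) (y : EuclideanSpace ℝ (Fin n)) : ℝ :=
  φ (y, traj n a α u y b) +
    ∫ s in a..b, ((b - s) ^ (β - 1) / Real.Gamma β) * L (traj n a α u y s, u s, s)

/-- Membership in `L^∞([a,b],ℝⁿ)` (a measurable, essentially bounded representative). -/
def admissible (n : ℕ) (a b : ℝ) (u : ℝ → EuclideanSpace ℝ (Fin n)) : Prop :=
  Measurable u ∧ ∃ C : ℝ, ∀ᵐ s ∂(volume : Measure ℝ), s ∈ Icc a b → ‖u s‖ ≤ C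

theorem kern_int {γ : ℝ} (hγ : 0 < γ) (a t : ℝ) :
    IntervalIntegrable (fun s => (t - s) ^ (γ - 1) / Real.Gamma γ) volume a t := by
  have h := (intervalIntegral.intervalIntegrable_rpow' (a := t - a) (b := t - t) (r := γ - 1)
    (by linarith)).comp_sub_left t
  have h2 : IntervalIntegrable (fun s => (t - s) ^ (γ - 1)) volume a t := by
    simpa using h
  exact h2.div_const _

theorem kern_val {γ : ℝ} (hγ : 0 < γ) (a t : ℝ) :
    ∫ s in a..t, (t - s) ^ (γ - 1) / Real.Gamma γ = (t - a) ^ γ / γ / Real.Gamma γ := by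
  rw [intervalIntegral.integral_div, intervalIntegral.integral_comp_sub_left (fun x => x ^ (γ - 1)) t,
    integral_rpow (Or.inl (by linarith))]
  simp [Real.zero_rpow hγ.ne']

theorem kern_nonneg {γ : ℝ} (hγ : 0 < γ) {s t : ℝ} (hat : s ≤ t) :
    0 ≤ (t - s) ^ (γ - 1) / Real.Gamma γ :=
  div_nonneg (Real.rpow_nonneg (by linarith) _) (Real.Gamma_pos_of_pos hγ).le

theorem kern_bound {γ : ℝ} (hγ : 0 < γ) {a b t : ℝ} (hat : a ≤ t) (htb : t ≤ b) :
    ∫ s in a..t, (t - s) ^ (γ - 1) / Real.Gamma γ ≤ (b - a) ^ γ / γ / Real.Gamma γ := by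
  rw [kern_val hγ a t]
  have := (Real.Gamma_pos_of_pos hγ).le
  have : (t - a) ^ γ ≤ (b - a) ^ γ :=
    Real.rpow_le_rpow (by linarith) (by linarith) hγ.le
  gcongr

theorem beta_val {α : ℝ} (h0 : 0 < α) (h1 : α < 1) {t r : ℝ} (htr : t < r) :
    ∫ s in t..r, ((s - t) ^ (-α) / Real.Gamma (1 - α)) * ((r - s) ^ (α - 1) / Real.Gamma α) = 1 := by
  have hB := Complex.betaIntegral_scaled ((1 - α : ℝ) : ℂ) (α : ℂ) (sub_pos.2 htr)
  rw [Complex.betaIntegral_eq_Gamma_mul_div _ _ (by simpa using h1) (by simpa using h0)] at hB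
  have e1 : ((1 - α : ℝ) : ℂ) + (α : ℂ) = 1 := by push_cast; ring
  rw [e1, sub_self, Complex.cpow_zero, Complex.Gamma_one, div_one, one_mul,
    Complex.Gamma_ofReal, Complex.Gamma_ofReal] at hB
  have hR : ∫ x in (0:ℝ)..(r - t), x ^ (-α) * ((r - t) - x) ^ (α - 1)
      = Real.Gamma (1 - α) * Real.Gamma α := by
    have : ((∫ x in (0:ℝ)..(r - t), x ^ (-α) * ((r - t) - x) ^ (α - 1) : ℝ) : ℂ)
      = ((Real.Gamma (1 - α) * Real.Gamma α : ℝ) : ℂ) := by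
      rw [← intervalIntegral.integral_ofReal]
      push_cast
      push_cast at hB
      rw [← hB]
      apply intervalIntegral.integral_congr
      intro x hx
      rw [uIcc_of_le (by linarith)] at hx
      simp only
      rw [Complex.ofReal_cpow hx.1, Complex.ofReal_cpow (by linarith [hx.2])]
      push_cast
      congr 2
      ring
    exact_mod_cast this
  have g1 := (Real.Gamma_pos_of_pos h0).ne'
  have g2 := (Real.Gamma_pos_of_pos (sub_pos.2 h1)).ne'
  have e2 := intervalIntegral.integral_comp_sub_right (a := t) (b := r)
    (fun x => x ^ (-α) * ((r - t) - x) ^ (α - 1)) t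
  rw [sub_self, hR] at e2
  have e3 : ∀ s : ℝ, ((s - t) ^ (-α) / Real.Gamma (1 - α)) * ((r - s) ^ (α - 1) / Real.Gamma α)
      = ((s - t) ^ (-α) * ((r - t) - (s - t)) ^ (α - 1)) / (Real.Gamma (1 - α) * Real.Gamma α) := by
    intro s
    rw [sub_sub_sub_cancel_right]
    field_simp
  simp_rw [e3]
  rw [intervalIntegral.integral_div, e2, div_self (mul_ne_zero g2 g1)]

theorem tri_fubini {E : Type*} [NormedAddCommGroup E] [NormedSpace ℝ E] [CompleteSpace E]
    {a b : ℝ} (hab : a ≤ b) (w : ℝ → ℝ → ℝ) (hw : Measurable (Function.uncurry w))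
    (P : ℝ → E) (hP : IntervalIntegrable P volume a b)
    (hnn : ∀ s τ, a ≤ τ → τ ≤ s → 0 ≤ w s τ)
    (hwi : ∀ s ∈ Ioc a b, IntervalIntegrable (w s) volume a s) (C : ℝ)
    (hC : ∀ s ∈ Ioc a b, ∫ τ in a..s, w s τ ≤ C) :
    IntervalIntegrable (fun s => (∫ τ in a..s, w s τ) • P s) volume a b ∧
    IntervalIntegrable (fun τ => ∫ s in τ..b, w s τ • P s) volume a b ∧
    ∫ s in a..b, (∫ τ in a..s, w s τ) • P s = ∫ τ in a..b, ∫ s in τ..b, w s τ • P s := by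
  set μ : Measure ℝ := volume.restrict (Ioc a b) with hμ
  rw [intervalIntegrable_iff_integrableOn_Ioc_of_le hab] at hP
  rw [intervalIntegrable_iff_integrableOn_Ioc_of_le hab,
    intervalIntegrable_iff_integrableOn_Ioc_of_le hab]
  let f : ℝ → ℝ → E := fun s τ => (Iic s).indicator (fun τ => w s τ • P s) τ
  have hPm : AEStronglyMeasurable P μ := hP.aestronglyMeasurable
  have hfm : AEStronglyMeasurable (Function.uncurry f) (μ.prod μ) := by
    have hS : MeasurableSet {p : ℝ × ℝ | p.2 ≤ p.1} := measurableSet_le measurable_snd measurable_fst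
    have : Function.uncurry f = {p : ℝ × ℝ | p.2 ≤ p.1}.indicator
        (fun p => w p.1 p.2 • P p.1) := by
      ext1 ⟨s, τ⟩
      simp [f, Function.uncurry, indicator]
    rw [this]
    exact (AEStronglyMeasurable.smul hw.aestronglyMeasurable hPm.comp_fst).indicator hS
  have hset : ∀ s ∈ Ioc a b, Ioc a b ∩ Iic s = Ioc a s := by
    intro s hs; ext x; simp only [mem_inter_iff, mem_Ioc, mem_Iic]
    constructor
    · rintro ⟨⟨h, -⟩, h'⟩; exact ⟨h, h'⟩
    · rintro ⟨h, h'⟩; exact ⟨⟨h, h'.trans hs.2⟩, h'⟩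
  have hsec : ∀ s ∈ Ioc a b, ∫ τ, f s τ ∂μ = (∫ τ in a..s, w s τ) • P s := by
    intro s hs
    simp only [f]
    rw [integral_indicator measurableSet_Iic, hμ, Measure.restrict_restrict measurableSet_Iic,
      inter_comm, hset s hs, integral_smul_const, intervalIntegral.integral_of_le hs.1.le]
  have hsecn : ∀ s ∈ Ioc a b, ∫ τ, ‖f s τ‖ ∂μ = (∫ τ in a..s, w s τ) * ‖P s‖ := by
    intro s hs
    simp only [f, norm_indicator_eq_indicator_norm]
    rw [integral_indicator measurableSet_Iic, hμ, Measure.restrict_restrict measurableSet_Iic,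
      inter_comm, hset s hs, intervalIntegral.integral_of_le hs.1.le, ← integral_mul_const]
    apply setIntegral_congr_fun measurableSet_Ioc
    intro τ hτ
    simp only [norm_smul, Real.norm_eq_abs]
    rw [abs_of_nonneg (hnn s τ hτ.1.le hτ.2)]
  have hint : Integrable (Function.uncurry f) (μ.prod μ) := by
    rw [integrable_prod_iff hfm]
    constructor
    · refine (ae_restrict_iff' measurableSet_Ioc).2 (Filter.Eventually.of_forall fun s hs => ?_)
      simp only [Function.uncurry, f]
      rw [integrable_indicator_iff measurableSet_Iic, IntegrableOn, hμ,
        Measure.restrict_restrict measurableSet_Iic, inter_comm, hset s hs]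
      have := hwi s hs
      rw [intervalIntegrable_iff_integrableOn_Ioc_of_le hs.1.le] at this
      exact this.smul_const _
    · refine Integrable.mono' (hP.norm.const_mul C) hfm.norm.integral_prod_right' ?_
      refine (ae_restrict_iff' measurableSet_Ioc).2 (Filter.Eventually.of_forall fun s hs => ?_)
      simp only [Function.uncurry]
      rw [hsecn s hs, Real.norm_eq_abs, abs_of_nonneg]
      · exact mul_le_mul_of_nonneg_right (hC s hs) (norm_nonneg _)
      · refine mul_nonneg (intervalIntegral.integral_nonneg hs.1.le fun τ hτ => hnn s τ hτ.1 hτ.2)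
          (norm_nonneg _)
  have hsec2 : ∀ τ ∈ Ioc a b, ∫ s, f s τ ∂μ = ∫ s in τ..b, w s τ • P s := by
    intro τ hτ
    have : (fun s => f s τ) = (Ici τ).indicator (fun s => w s τ • P s) := by
      ext1 s; simp [f, indicator]
    rw [this, integral_indicator measurableSet_Ici, hμ, Measure.restrict_restrict measurableSet_Ici,
      intervalIntegral.integral_of_le hτ.2, ← integral_Icc_eq_integral_Ioc]
    congr 2
    ext x; simp only [mem_inter_iff, mem_Ioc, mem_Ici, mem_Icc]
    constructor
    · rintro ⟨h, -, h'⟩; exact ⟨h, h'⟩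
    · rintro ⟨h, h'⟩; exact ⟨h, hτ.1.trans_le h, h'⟩
  refine ⟨?_, ?_, ?_⟩
  · refine hint.integral_prod_left.congr ?_
    exact (ae_restrict_iff' measurableSet_Ioc).2 (Filter.Eventually.of_forall fun s hs => hsec s hs)
  · refine hint.integral_prod_right.congr ?_
    exact (ae_restrict_iff' measurableSet_Ioc).2 (Filter.Eventually.of_forall fun s hs => hsec2 s hs)
  · rw [intervalIntegral.integral_of_le hab, intervalIntegral.integral_of_le hab,
      ← setIntegral_congr_fun measurableSet_Ioc hsec, ← setIntegral_congr_fun measurableSet_Ioc hsec2]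
    exact integral_integral_swap hint

theorem meas_volterra {E : Type*} [NormedAddCommGroup E] [NormedSpace ℝ E]
    (a : ℝ) (f : ℝ → ℝ → E) (hf : StronglyMeasurable (Function.uncurry f)) :
    StronglyMeasurable (fun t => ∫ s in a..t, f t s) := by
  unfold intervalIntegral
  have h1 : StronglyMeasurable fun t => ∫ s in Ioc a t, f t s := by
    have : (fun t => ∫ s in Ioc a t, f t s) = fun t => ∫ s,
        {p : ℝ × ℝ | p.2 ∈ Ioc a p.1}.indicator (Function.uncurry f) (t, s) := by
      ext1 t
      rw [← integral_indicator measurableSet_Ioc]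
      rfl
    rw [this]
    refine StronglyMeasurable.integral_prod_right (f := fun t s =>
      {p : ℝ × ℝ | p.2 ∈ Ioc a p.1}.indicator (Function.uncurry f) (t, s)) ?_
    exact hf.indicator ((measurableSet_lt measurable_const measurable_snd).inter
      (measurableSet_le measurable_snd measurable_fst))
  have h2 : StronglyMeasurable fun t => ∫ s in Ioc t a, f t s := by
    have : (fun t => ∫ s in Ioc t a, f t s) = fun t => ∫ s,
        {p : ℝ × ℝ | p.2 ∈ Ioc p.1 a}.indicator (Function.uncurry f) (t, s) := by
      ext1 t
      rw [← integral_indicator measurableSet_Ioc]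
      rfl
    rw [this]
    refine StronglyMeasurable.integral_prod_right (f := fun t s =>
      {p : ℝ × ℝ | p.2 ∈ Ioc p.1 a}.indicator (Function.uncurry f) (t, s)) ?_
    exact hf.indicator ((measurableSet_lt measurable_fst measurable_snd).inter
      (measurableSet_le measurable_snd measurable_const))
  exact h1.sub h2

theorem ae_Ioc {p : ℝ → Prop} {a b : ℝ} (h : ∀ s ∈ Ioc a b, p s) :
    ∀ᵐ s ∂(volume.restrict (Ioc a b)), p s :=
  (ae_restrict_iff' measurableSet_Ioc).2 (Filter.Eventually.of_forall h)

theorem adm_ae {n : ℕ} {a b : ℝ} {u : ℝ → EuclideanSpace ℝ (Fin n)} (hu : admissible n a b u) :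
    ∃ C : ℝ, 0 ≤ C ∧ ∀ t ≤ b, ∀ᵐ s ∂(volume.restrict (Ioc a t)), ‖u s‖ ≤ C := by
  obtain ⟨-, C, hC⟩ := hu
  refine ⟨|C|, abs_nonneg _, fun t ht => ?_⟩
  rw [ae_restrict_iff' measurableSet_Ioc]
  filter_upwards [hC] with s hs h
  exact (hs ⟨h.1.le, h.2.trans ht⟩).trans (le_abs_self _)

theorem traj_int {n : ℕ} {a b α : ℝ} (hα : 0 < α) {u : ℝ → EuclideanSpace ℝ (Fin n)}
    (hu : admissible n a b u) {t : ℝ} (ht : t ∈ Icc a b) :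
    IntervalIntegrable (fun s => ((t - s) ^ (α - 1) / Real.Gamma α) • u s) volume a t := by
  obtain ⟨C, -, hC⟩ := adm_ae hu
  have h := kern_int hα a t
  rw [intervalIntegrable_iff_integrableOn_Ioc_of_le ht.1] at h ⊢
  exact h.smul_bdd C hu.1.aestronglyMeasurable (hC t ht.2)

theorem traj_lin {n : ℕ} {a b α : ℝ} (hα : 0 < α) {u v : ℝ → EuclideanSpace ℝ (Fin n)}
    (hu : admissible n a b u) (hv : admissible n a b v) (y h : EuclideanSpace ℝ (Fin n)) (ε : ℝ)
    {t : ℝ} (ht : t ∈ Icc a b) :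
    traj n a α (fun s => u s + ε • v s) (y + ε • h) t
      = traj n a α u y t + ε • traj n a α v h t := by
  unfold traj
  have e : ∀ s, ((t - s) ^ (α - 1) / Real.Gamma α) • (u s + ε • v s)
      = ((t - s) ^ (α - 1) / Real.Gamma α) • u s
        + ε • (((t - s) ^ (α - 1) / Real.Gamma α) • v s) := by
    intro s; rw [smul_add, smul_comm]
  simp_rw [e]
  rw [intervalIntegral.integral_add (g := fun s => ε • (((t - s) ^ (α - 1) / Real.Gamma α) • v s))
      (traj_int hα hu ht) ((traj_int hα hv ht).smul ε),
    intervalIntegral.integral_smul, smul_add]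
  abel

theorem traj_bdd {n : ℕ} {a b α : ℝ} (hα : 0 < α) {u : ℝ → EuclideanSpace ℝ (Fin n)}
    (hu : admissible n a b u) (y : EuclideanSpace ℝ (Fin n)) :
    ∃ R : ℝ, ∀ t ∈ Icc a b, ‖traj n a α u y t‖ ≤ R := by
  obtain ⟨C, hC0, hC⟩ := adm_ae hu
  refine ⟨‖y‖ + (b - a) ^ α / α / Real.Gamma α * C, fun t ht => ?_⟩
  unfold traj
  refine (norm_add_le _ _).trans (add_le_add le_rfl ?_)
  refine le_trans ?_ (mul_le_mul_of_nonneg_right (kern_bound hα ht.1 ht.2) hC0)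
  rw [← intervalIntegral.integral_mul_const]
  refine intervalIntegral.norm_integral_le_of_norm_le ht.1 ?_ ((kern_int hα a t).mul_const C)
  have := hC t ht.2
  rw [ae_restrict_iff' measurableSet_Ioc] at this
  filter_upwards [this] with s hs h
  rw [norm_smul, Real.norm_eq_abs, abs_of_nonneg (kern_nonneg hα h.2)]
  exact mul_le_mul_of_nonneg_left (hs h) (kern_nonneg hα h.2)

theorem traj_meas {n : ℕ} (a α : ℝ) {u : ℝ → EuclideanSpace ℝ (Fin n)}
    (hu : Measurable u) (y : EuclideanSpace ℝ (Fin n)) :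
    StronglyMeasurable (traj n a α u y) := by
  unfold traj
  refine stronglyMeasurable_const.add (meas_volterra a
    (fun t s => ((t - s) ^ (α - 1) / Real.Gamma α) • u s) ?_)
  refine Measurable.stronglyMeasurable ?_
  simp only [Function.uncurry_def]
  fun_prop

theorem grad_comp {E X : Type*} [NormedAddCommGroup E] [InnerProductSpace ℝ E] [CompleteSpace E]
    [NormedAddCommGroup X] [NormedSpace ℝ X] (f : X → ℝ) (c : E → X) (c' : E →L[ℝ] X) (x : E)
    (hc : HasFDerivAt c c' x) (hf : DifferentiableAt ℝ f (c x)) :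
    gradient (fun z => f (c z)) x
      = (InnerProductSpace.toDual ℝ E).symm ((fderiv ℝ f (c x)).comp c') := by
  have := (hf.hasFDerivAt.comp x hc).fderiv
  unfold gradient
  rw [← this]
  rfl

theorem deriv_int {E : Type*} [NormedAddCommGroup E] [InnerProductSpace ℝ E] [ProperSpace E]
    {a b R : ℝ} (L : E × E × ℝ → ℝ) (hL : ContDiff ℝ 2 L) (k : ℝ → ℝ) (X U W V : ℝ → E)
    (hk : Integrable k (volume.restrict (Ioc a b)))
    (hX : AEStronglyMeasurable X (volume.restrict (Ioc a b)))
    (hU : AEStronglyMeasurable U (volume.restrict (Ioc a b)))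
    (hW : AEStronglyMeasurable W (volume.restrict (Ioc a b)))
    (hV : AEStronglyMeasurable V (volume.restrict (Ioc a b)))
    (bX : ∀ᵐ s ∂(volume.restrict (Ioc a b)), ‖X s‖ ≤ R)
    (bU : ∀ᵐ s ∂(volume.restrict (Ioc a b)), ‖U s‖ ≤ R)
    (bW : ∀ᵐ s ∂(volume.restrict (Ioc a b)), ‖W s‖ ≤ R)
    (bV : ∀ᵐ s ∂(volume.restrict (Ioc a b)), ‖V s‖ ≤ R) :
    HasDerivAt (fun ε : ℝ => ∫ s in Ioc a b, k s * L (X s + ε • W s, U s + ε • V s, s))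
      (∫ s in Ioc a b, k s * fderiv ℝ L (X s, U s, s) (W s, V s, 0)) 0 := by
  have hLc : Continuous L := hL.continuous
  have hLd : Differentiable ℝ L := hL.differentiable (by norm_num)
  have hL' : Continuous (fderiv ℝ L) := hL.continuous_fderiv (by norm_num)
  have hcpt : IsCompact (Metric.closedBall (0 : E) (2 * R) ×ˢ (Metric.closedBall (0 : E) (2 * R)
      ×ˢ Icc a b)) :=
    (isCompact_closedBall _ _).prod ((isCompact_closedBall _ _).prod isCompact_Icc)
  obtain ⟨M, hM⟩ := hcpt.exists_bound_of_continuousOn (f := fderiv ℝ L) hL'.continuousOn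
  obtain ⟨M0, hM0⟩ := hcpt.exists_bound_of_continuousOn hLc.continuousOn
  have hin : ∀ᵐ s ∂(volume.restrict (Ioc a b)), ∀ ε ∈ Metric.ball (0:ℝ) 1,
      (X s + ε • W s, U s + ε • V s, s) ∈ (Metric.closedBall (0 : E) (2 * R) ×ˢ
        (Metric.closedBall (0 : E) (2 * R) ×ˢ Icc a b)) := by
    filter_upwards [bX, bU, bW, bV, ae_restrict_mem measurableSet_Ioc] with s h1 h2 h3 h4 h5 ε hε
    have hε' : |ε| ≤ 1 := by
      rw [Metric.mem_ball, dist_zero_right, Real.norm_eq_abs] at hε; exact hε.le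
    have key : ∀ p q : E, ‖p‖ ≤ R → ‖q‖ ≤ R → ‖p + ε • q‖ ≤ 2 * R := by
      intro p q hp hq
      calc ‖p + ε • q‖ ≤ ‖p‖ + |ε| * ‖q‖ := by
            refine (norm_add_le _ _).trans ?_
            rw [norm_smul, Real.norm_eq_abs]
        _ ≤ R + 1 * R := by
            gcongr
        _ = 2 * R := by ring
    simp only [mem_prod, Metric.mem_closedBall, dist_zero_right]
    exact ⟨key _ _ h1 h3, key _ _ h2 h4, h5.1.le, h5.2⟩
  have hpm : ∀ ε : ℝ, AEStronglyMeasurable (fun s => (X s + ε • W s, U s + ε • V s, s))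
      (volume.restrict (Ioc a b)) := fun ε =>
    (hX.add (hW.const_smul ε)).prodMk ((hU.add (hV.const_smul ε)).prodMk
      measurable_id.aestronglyMeasurable)
  have hfm : ∀ ε : ℝ, AEStronglyMeasurable (fun s => L (X s + ε • W s, U s + ε • V s, s))
      (volume.restrict (Ioc a b)) := fun ε => hLc.comp_aestronglyMeasurable (hpm ε)
  have hdm : AEStronglyMeasurable
      (fun s => fderiv ℝ L (X s + (0:ℝ) • W s, U s + (0:ℝ) • V s, s) (W s, V s, 0))
      (volume.restrict (Ioc a b)) := by
    have h1 := hL'.comp_aestronglyMeasurable (hpm 0)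
    have h2 : AEStronglyMeasurable (fun s => (W s, V s, (0:ℝ))) (volume.restrict (Ioc a b)) :=
      hW.prodMk (hV.prodMk aestronglyMeasurable_const)
    exact (isBoundedBilinearMap_apply (𝕜 := ℝ) (E := E × E × ℝ) (F := ℝ)).continuous.comp_aestronglyMeasurable
      (h1.prodMk h2)
  have key := hasDerivAt_integral_of_dominated_loc_of_deriv_le
    (μ := volume.restrict (Ioc a b)) (x₀ := (0:ℝ)) (s := Metric.ball (0:ℝ) 1)
    (F := fun ε s => k s * L (X s + ε • W s, U s + ε • V s, s))
    (F' := fun ε s => k s * fderiv ℝ L (X s + ε • W s, U s + ε • V s, s) (W s, V s, 0))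
    (bound := fun s => ‖k s‖ * (M * R)) (Metric.ball_mem_nhds _ one_pos)
    (Filter.Eventually.of_forall fun ε => hk.aestronglyMeasurable.mul (hfm ε))
    (by
      refine hk.mul_bdd (c := M0) (hfm 0) ?_
      filter_upwards [hin] with s hs
      exact hM0 _ (hs 0 (Metric.mem_ball_self one_pos)))
    (hk.aestronglyMeasurable.mul hdm)
    (by
      filter_upwards [hin, bW, bV] with s hs h3 h4 ε hε
      rw [norm_mul]
      refine mul_le_mul_of_nonneg_left ?_ (norm_nonneg _)
      have hm := hM _ (hs ε hε)
      refine (ContinuousLinearMap.le_opNorm _ _).trans ?_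
      refine mul_le_mul hm ?_ (norm_nonneg _) ((norm_nonneg _).trans hm)
      simp only [Prod.norm_mk, norm_zero]
      have := (norm_nonneg _).trans h3
      simp [h3, h4, this])
    (hk.norm.mul_const _)
    (by
      refine Filter.Eventually.of_forall fun s ε _ => ?_
      refine HasDerivAt.const_mul _ ?_
      have hc : HasDerivAt (fun ε : ℝ => (X s + ε • W s, U s + ε • V s, s)) (W s, V s, 0) ε := by
        refine HasDerivAt.prodMk ?_ (HasDerivAt.prodMk ?_ (hasDerivAt_const _ _))
        · simpa using ((hasDerivAt_id ε).smul_const (W s)).const_add (X s)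
        · simpa using ((hasDerivAt_id ε).smul_const (V s)).const_add (U s)
      exact (hLd _).hasFDerivAt.comp_hasDerivAt ε hc)
  simpa using key.2

theorem first_variation {n : ℕ} {a b : ℝ} (hab : a < b)
    {α β : ℝ} (hα0 : 0 < α) (hβ : 0 < β)
    {φ : EuclideanSpace ℝ (Fin n) × EuclideanSpace ℝ (Fin n) → ℝ}
    {L : EuclideanSpace ℝ (Fin n) × EuclideanSpace ℝ (Fin n) × ℝ → ℝ}
    (hφ : ContDiff ℝ 2 φ) (hL : ContDiff ℝ 2 L)
    {u : ℝ → EuclideanSpace ℝ (Fin n)} {y : EuclideanSpace ℝ (Fin n)}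
    (hadm : admissible n a b u)
    (hmin : ∀ u' : ℝ → EuclideanSpace ℝ (Fin n), ∀ y' : EuclideanSpace ℝ (Fin n),
      admissible n a b u' → bolza n a b α β φ L u y ≤ bolza n a b α β φ L u' y')
    (v : ℝ → EuclideanSpace ℝ (Fin n)) (h : EuclideanSpace ℝ (Fin n))
    (hv : admissible n a b v) :
    fderiv ℝ φ (y, traj n a α u y b) (h, traj n a α v h b) +
      ∫ s in a..b, ((b - s) ^ (β - 1) / Real.Gamma β) *
        fderiv ℝ L (traj n a α u y s, u s, s) (traj n a α v h s, v s, 0) = 0 := by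
  obtain ⟨R1, -, h1⟩ := adm_ae hadm
  obtain ⟨R2, -, h2⟩ := adm_ae hv
  obtain ⟨R3, h3⟩ := traj_bdd hα0 hadm y
  obtain ⟨R4, h4⟩ := traj_bdd hα0 hv h
  have hk := kern_int hβ a b
  rw [intervalIntegrable_iff_integrableOn_Ioc_of_le hab.le] at hk
  set R := max (max R1 R2) (max R3 R4) with hR
  have hd := deriv_int (a := a) (b := b) (R := R) L hL _ (traj n a α u y) u (traj n a α v h) v hk
    (traj_meas a α hadm.1 y).aestronglyMeasurable hadm.1.aestronglyMeasurable
    (traj_meas a α hv.1 h).aestronglyMeasurable hv.1.aestronglyMeasurable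
    (ae_Ioc fun s hs => (h3 s ⟨hs.1.le, hs.2⟩).trans (by simp [hR]))
    ((h1 b le_rfl).mono fun s hs => hs.trans (by simp [hR]))
    (ae_Ioc fun s hs => (h4 s ⟨hs.1.le, hs.2⟩).trans (by simp [hR]))
    ((h2 b le_rfl).mono fun s hs => hs.trans (by simp [hR]))
  have hφd : HasDerivAt (fun ε : ℝ => φ (y + ε • h, traj n a α u y b + ε • traj n a α v h b))
      (fderiv ℝ φ (y, traj n a α u y b) (h, traj n a α v h b)) 0 := by
    have hc : HasDerivAt (fun ε : ℝ => (y + ε • h, traj n a α u y b + ε • traj n a α v h b))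
        (h, traj n a α v h b) 0 := by
      refine HasDerivAt.prodMk ?_ ?_
      · simpa using ((hasDerivAt_id (0:ℝ)).smul_const h).const_add y
      · simpa using ((hasDerivAt_id (0:ℝ)).smul_const (traj n a α v h b)).const_add
          (traj n a α u y b)
    have := ((hφ.differentiable (by norm_num)) _).hasFDerivAt.comp_hasDerivAt (0:ℝ) hc
    simpa [Function.comp_def] using this
  have hsum := hφd.add hd
  have hbol : ∀ ε : ℝ, bolza n a b α β φ L (fun s => u s + ε • v s) (y + ε • h)
      = φ (y + ε • h, traj n a α u y b + ε • traj n a α v h b) +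
        ∫ s in Ioc a b, ((b - s) ^ (β - 1) / Real.Gamma β) *
          L (traj n a α u y s + ε • traj n a α v h s, u s + ε • v s, s) := by
    intro ε
    unfold bolza
    rw [traj_lin hα0 hadm hv y h ε ⟨hab.le, le_rfl⟩, intervalIntegral.integral_of_le hab.le]
    congr 1
    apply setIntegral_congr_fun measurableSet_Ioc
    intro s hs
    simp only
    rw [traj_lin hα0 hadm hv y h ε ⟨hs.1.le, hs.2⟩]
  have hadm' : ∀ ε : ℝ, admissible n a b (fun s => u s + ε • v s) := by
    intro ε
    refine ⟨hadm.1.add (hv.1.const_smul ε), ?_⟩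
    obtain ⟨-, C, hC⟩ := hadm
    obtain ⟨-, C', hC'⟩ := hv
    refine ⟨C + |ε| * C', ?_⟩
    filter_upwards [hC, hC'] with s hs hs' hm
    refine (norm_add_le _ _).trans (add_le_add (hs hm) ?_)
    rw [norm_smul, Real.norm_eq_abs]
    exact mul_le_mul_of_nonneg_left (hs' hm) (abs_nonneg _)
  rw [intervalIntegral.integral_of_le hab.le]
  refine IsLocalMin.hasDerivAt_eq_zero ?_ hsum
  refine Filter.Eventually.of_forall fun ε => ?_
  have := hmin _ (y + ε • h) (hadm' ε)
  have h0 := hbol 0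
  simp only [zero_smul, add_zero] at h0
  simp only [Pi.add_apply, zero_smul, add_zero]
  rw [← h0, ← hbol ε]
  exact this

theorem euler_eq {n : ℕ} {a b : ℝ} (hab : a < b) {α : ℝ} (hα0 : 0 < α)
    (c : EuclideanSpace ℝ (Fin n)) (P Q : ℝ → EuclideanSpace ℝ (Fin n))
    (hP : IntervalIntegrable P volume a b) (hQ : IntervalIntegrable Q volume a b)
    (hvar : ∀ v : ℝ → EuclideanSpace ℝ (Fin n), admissible n a b v →
      ⟪c, traj n a α v 0 b⟫ + ∫ s in a..b, (⟪P s, traj n a α v 0 s⟫ + ⟪Q s, v s⟫) = 0) :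
    ∀ᵐ τ ∂(volume.restrict (Ioc a b)),
      Q τ = -(((b - τ) ^ (α - 1) / Real.Gamma α) • c)
        - ∫ s in τ..b, ((s - τ) ^ (α - 1) / Real.Gamma α) • P s := by
  -- the adjoint function
  set F : ℝ → EuclideanSpace ℝ (Fin n) := fun τ => ((b - τ) ^ (α - 1) / Real.Gamma α) • c
      + (∫ s in τ..b, ((s - τ) ^ (α - 1) / Real.Gamma α) • P s) + Q τ with hF
  have hfub := tri_fubini hab.le (fun s τ => (s - τ) ^ (α - 1) / Real.Gamma α)
    (by simp only [Function.uncurry_def]; fun_prop) P hP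
    (fun s τ _ h => kern_nonneg hα0 h) (fun s _ => kern_int hα0 a s) _
    (fun s hs => kern_bound hα0 hs.1.le hs.2)
  have hc : IntervalIntegrable (fun τ => ((b - τ) ^ (α - 1) / Real.Gamma α) • c) volume a b := by
    have := kern_int hα0 a b
    rw [intervalIntegrable_iff_integrableOn_Ioc_of_le hab.le] at this ⊢
    exact this.smul_const c
  have hFi : Integrable F (volume.restrict (Ioc a b)) := by
    have := (hc.add hfub.2.1).add hQ
    rw [intervalIntegrable_iff_integrableOn_Ioc_of_le hab.le] at this
    exact this
  have hF0 : F =ᵐ[volume.restrict (Ioc a b)] 0 := by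
    refine hFi.ae_eq_zero_of_forall_setIntegral_eq_zero fun S hS _ => ?_
    set χ : ℝ → ℝ := S.indicator (fun _ => (1:ℝ)) with hχ
    have hχm : Measurable χ := measurable_const.indicator hS
    have hχ0 : ∀ s, 0 ≤ χ s := fun s => indicator_nonneg (fun _ _ => zero_le_one) _
    have hχ1 : ∀ s, χ s ≤ 1 := fun s => by
      simp only [hχ, indicator]; split_ifs <;> norm_num
    have hχn : ∀ s, ‖χ s‖ ≤ 1 := fun s => by
      rw [Real.norm_eq_abs, abs_of_nonneg (hχ0 s)]; exact hχ1 s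
    have hwi : ∀ s, a ≤ s → IntervalIntegrable
        (fun τ => ((s - τ) ^ (α - 1) / Real.Gamma α) * χ τ) volume a s := by
      intro s hs
      have := kern_int hα0 a s
      rw [intervalIntegrable_iff_integrableOn_Ioc_of_le hs] at this ⊢
      exact this.mul_bdd (c := 1) hχm.aestronglyMeasurable (Filter.Eventually.of_forall hχn)
    set A : ℝ → ℝ := fun s => ∫ τ in a..s, ((s - τ) ^ (α - 1) / Real.Gamma α) * χ τ with hA
    have hfub2 := tri_fubini hab.le (fun s τ => ((s - τ) ^ (α - 1) / Real.Gamma α) * χ τ)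
      (by simp only [Function.uncurry_def]; fun_prop) P hP
      (fun s τ _ h => mul_nonneg (kern_nonneg hα0 h) (hχ0 τ)) (fun s hs => hwi s hs.1.le) _
      (fun s hs => by
        refine le_trans ?_ (kern_bound hα0 hs.1.le hs.2)
        refine intervalIntegral.integral_mono_on hs.1.le (hwi s hs.1.le) (kern_int hα0 a s) ?_
        intro τ hτ
        exact mul_le_of_le_one_right (kern_nonneg hα0 hτ.2) (hχ1 τ))
    have hχint : ∀ f : ℝ → EuclideanSpace ℝ (Fin n), IntervalIntegrable f volume a b →
        IntervalIntegrable (fun s => χ s • f s) volume a b := by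
      intro f hf
      rw [intervalIntegrable_iff_integrableOn_Ioc_of_le hab.le] at hf ⊢
      exact hf.bdd_smul 1 hχm.aestronglyMeasurable (Filter.Eventually.of_forall hχn)
    have htraj : ∀ (e : EuclideanSpace ℝ (Fin n)) (s : ℝ),
        traj n a α (fun τ => χ τ • e) 0 s = A s • e := by
      intro e s
      simp only [traj, hA, zero_add, smul_smul]
      rw [intervalIntegral.integral_smul_const]
    have hvec : A b • c + (∫ s in a..b, A s • P s) + ∫ s in a..b, χ s • Q s = 0 := by
      refine ext_inner_left ℝ fun e => ?_
      have hv := hvar (fun τ => χ τ • e) ⟨hχm.smul_const e, ‖e‖,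
        Filter.Eventually.of_forall fun s _ => by
          rw [norm_smul]
          exact mul_le_of_le_one_left (norm_nonneg _) (hχn s)⟩
      simp only [htraj] at hv
      have e1 : ∀ s, ⟪P s, A s • e⟫ + ⟪Q s, χ s • e⟫ = ⟪e, A s • P s + χ s • Q s⟫ := by
        intro s
        rw [inner_add_right, inner_smul_right, inner_smul_right, inner_smul_right,
          inner_smul_right, real_inner_comm e, real_inner_comm e]
      simp only [e1] at hv
      have hsum := hfub2.1.add (hχint Q hQ)
      rw [intervalIntegrable_iff_integrableOn_Ioc_of_le hab.le] at hsum
      have e2 : ∫ s in a..b, ⟪e, A s • P s + χ s • Q s⟫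
          = ⟪e, ∫ s in a..b, (A s • P s + χ s • Q s)⟫ := by
        rw [intervalIntegral.integral_of_le hab.le, intervalIntegral.integral_of_le hab.le]
        exact integral_inner hsum e
      rw [e2, intervalIntegral.integral_add hfub2.1 (hχint Q hQ), inner_smul_right,
        real_inner_comm] at hv
      rw [inner_zero_right, add_assoc, inner_add_right, inner_smul_right]
      exact hv
    rw [hfub2.2.2] at hvec
    have e3 : A b • c = ∫ τ in a..b, χ τ • (((b - τ) ^ (α - 1) / Real.Gamma α) • c) := by
      simp only [hA]
      rw [← intervalIntegral.integral_smul_const]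
      congr 1; ext1 τ
      rw [smul_smul, mul_comm]
    have e4 : ∀ τ, ∫ s in τ..b, (((s - τ) ^ (α - 1) / Real.Gamma α) * χ τ) • P s
        = χ τ • ∫ s in τ..b, ((s - τ) ^ (α - 1) / Real.Gamma α) • P s := by
      intro τ
      rw [← intervalIntegral.integral_smul]
      congr 1; ext1 s
      rw [smul_smul, mul_comm]
    simp only [e4] at hvec
    rw [e3, ← intervalIntegral.integral_add (hχint _ hc) (hχint _ hfub.2.1),
      ← intervalIntegral.integral_add ((hχint _ hc).add (hχint _ hfub.2.1)) (hχint _ hQ),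
      intervalIntegral.integral_of_le hab.le] at hvec
    rw [← integral_indicator hS, ← hvec]
    congr 1; ext1 τ
    simp only [hχ, hF, indicator]
    split_ifs <;> simp
  filter_upwards [hF0] with τ hτ
  simp only [hF, Pi.zero_apply] at hτ
  rw [eq_neg_of_add_eq_zero_right hτ]
  abel

theorem abel_inv {n : ℕ} {a b : ℝ} {α : ℝ} (hα0 : 0 < α) (hα1 : α < 1)
    (c : EuclideanSpace ℝ (Fin n)) (P Q : ℝ → EuclideanSpace ℝ (Fin n))
    (hP : IntervalIntegrable P volume a b)
    (hQ : ∀ᵐ τ ∂(volume.restrict (Ioc a b)),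
      Q τ = -(((b - τ) ^ (α - 1) / Real.Gamma α) • c)
        - ∫ s in τ..b, ((s - τ) ^ (α - 1) / Real.Gamma α) • P s) {t : ℝ} (ht : t ∈ Ico a b) :
    ∫ s in t..b, ((s - t) ^ (-α) / Real.Gamma (1 - α)) • Q s = -c - ∫ s in t..b, P s := by
  have hP' : IntervalIntegrable P volume t b :=
    hP.mono_set (by
      rw [uIcc_of_le ht.2.le, uIcc_of_le (ht.1.trans ht.2.le)]
      exact Icc_subset_Icc_left ht.1)
  have hint : ∀ r, t < r → IntervalIntegrable (fun s => ((s - t) ^ (-α) / Real.Gamma (1 - α)) *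
      ((r - s) ^ (α - 1) / Real.Gamma α)) volume t r := by
    intro r hr
    by_contra hcon
    have h1 := beta_val hα0 hα1 hr
    rw [intervalIntegral.integral_undef hcon] at h1
    exact zero_ne_one h1
  have hfub := tri_fubini ht.2.le (fun r s => ((s - t) ^ (-α) / Real.Gamma (1 - α)) *
      ((r - s) ^ (α - 1) / Real.Gamma α)) (by simp only [Function.uncurry_def]; fun_prop) P hP'
    (fun r s h1 h2 => mul_nonneg (div_nonneg (Real.rpow_nonneg (by linarith) _)
      (Real.Gamma_pos_of_pos (by linarith)).le) (kern_nonneg hα0 h2))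
    (fun r hr => hint r hr.1) 1 (fun r hr => (beta_val hα0 hα1 hr.1).le)
  have e1 : ∫ s in t..b, ((s - t) ^ (-α) / Real.Gamma (1 - α)) • Q s
      = ∫ s in t..b, (-((((s - t) ^ (-α) / Real.Gamma (1 - α)) *
          ((b - s) ^ (α - 1) / Real.Gamma α)) • c) - ∫ r in s..b,
          (((s - t) ^ (-α) / Real.Gamma (1 - α)) * ((r - s) ^ (α - 1) / Real.Gamma α)) • P r) := by
    apply intervalIntegral.integral_congr_ae
    rw [uIoc_of_le ht.2.le]
    rw [ae_restrict_iff' measurableSet_Ioc] at hQ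
    filter_upwards [hQ] with s hs hst
    rw [hs ⟨ht.1.trans_lt hst.1, hst.2⟩, smul_sub, smul_neg, smul_smul,
      ← intervalIntegral.integral_smul]
    simp only [smul_smul]
  have hci : IntervalIntegrable (fun s => (((s - t) ^ (-α) / Real.Gamma (1 - α)) *
      ((b - s) ^ (α - 1) / Real.Gamma α)) • c) volume t b := by
    have := hint b ht.2
    rw [intervalIntegrable_iff_integrableOn_Ioc_of_le ht.2.le] at this ⊢
    exact this.smul_const c
  rw [e1, intervalIntegral.integral_sub (f := fun s => -((((s - t) ^ (-α) / Real.Gamma (1 - α)) *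
      ((b - s) ^ (α - 1) / Real.Gamma α)) • c)) hci.neg hfub.2.1, ← hfub.2.2,
    intervalIntegral.integral_neg, intervalIntegral.integral_smul_const,
    beta_val hα0 hα1 ht.2, one_smul]
  congr 1
  apply intervalIntegral.integral_congr_ae
  refine Filter.Eventually.of_forall fun r hr => ?_
  rw [uIoc_of_le ht.2.le] at hr
  rw [beta_val hα0 hα1 hr.1, one_smul]

theorem stmt_7 (n : ℕ) (hn : 1 ≤ n) (a b : ℝ) (hab : a < b)
    (α β : ℝ) (hα0 : 0 < α) (hα1 : α ≤ 1) (hβ : 0 < β)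
    (φ : EuclideanSpace ℝ (Fin n) × EuclideanSpace ℝ (Fin n) → ℝ)
    (L : EuclideanSpace ℝ (Fin n) × EuclideanSpace ℝ (Fin n) × ℝ → ℝ)
    (hφ : ContDiff ℝ 2 φ) (hL : ContDiff ℝ 2 L)
    (u : ℝ → EuclideanSpace ℝ (Fin n)) (y : EuclideanSpace ℝ (Fin n))
    (hadm : admissible n a b u)
    (hmin : ∀ u' : ℝ → EuclideanSpace ℝ (Fin n), ∀ y' : EuclideanSpace ℝ (Fin n),
      admissible n a b u' → bolza n a b α β φ L u y ≤ bolza n a b α β φ L u' y') :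
    ∃ q g : ℝ → EuclideanSpace ℝ (Fin n),
      IntervalIntegrable g volume a b ∧
      (∀ t ∈ Icc a b, q t = q a + ∫ s in a..t, g s) ∧
      (α < 1 → ∀ᵐ t ∂(volume.restrict (Icc a b)),
          q t = ∫ s in t..b, (((s - t) ^ (-α) / Real.Gamma (1 - α)) *
              ((b - s) ^ (β - 1) / Real.Gamma β)) •
            gradient (fun z => L (traj n a α u y s, z, s)) (u s)) ∧
      (α = 1 → ∀ᵐ t ∂(volume.restrict (Icc a b)),
          q t = ((b - t) ^ (β - 1) / Real.Gamma β) •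
            gradient (fun z => L (traj n a α u y t, z, t)) (u t)) ∧
      q a = gradient (fun z => φ (z, traj n a α u y b)) (traj n a α u y a) ∧
      -q b = gradient (fun z => φ (traj n a α u y a, z)) (traj n a α u y b) := by


  have hLd : Differentiable ℝ L := hL.differentiable (by norm_num)
  have hφd : Differentiable ℝ φ := hφ.differentiable (by norm_num)
  have hL' : Continuous (fderiv ℝ L) := hL.continuous_fderiv (by norm_num)
  set x := traj n a α u y with hx
  have hxa : x a = y := by simp [hx, traj]
  set k : ℝ → ℝ := fun s => (b - s) ^ (β - 1) / Real.Gamma β with hk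
  set c1 := gradient (fun z => φ (z, x b)) (x a) with hc1
  set c2 := gradient (fun z => φ (x a, z)) (x b) with hc2
  set g1 : ℝ → EuclideanSpace ℝ (Fin n) := fun s => gradient (fun z => L (z, u s, s)) (x s) with hg1
  set g2 : ℝ → EuclideanSpace ℝ (Fin n) := fun s => gradient (fun z => L (x s, z, s)) (u s) with hg2
  have hc1' : c1 = (InnerProductSpace.toDual ℝ _).symm ((fderiv ℝ φ (x a, x b)).comp
      (ContinuousLinearMap.inl ℝ _ _)) :=
    grad_comp φ (fun z => (z, x b)) _ (x a) (hasFDerivAt_prodMk_left _ _) (hφd _)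
  have hc2' : c2 = (InnerProductSpace.toDual ℝ _).symm ((fderiv ℝ φ (x a, x b)).comp
      (ContinuousLinearMap.inr ℝ _ _)) :=
    grad_comp φ (fun z => (x a, z)) _ (x b) (hasFDerivAt_prodMk_right _ _) (hφd _)
  have hg1' : ∀ s, g1 s = (InnerProductSpace.toDual ℝ _).symm ((fderiv ℝ L (x s, u s, s)).comp
      (ContinuousLinearMap.inl ℝ _ _)) := fun s =>
    grad_comp L (fun z => (z, u s, s)) _ (x s) (hasFDerivAt_prodMk_left _ _) (hLd _)
  have hg2' : ∀ s, g2 s = (InnerProductSpace.toDual ℝ _).symm ((fderiv ℝ L (x s, u s, s)).comp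
      ((ContinuousLinearMap.inr ℝ _ _).comp (ContinuousLinearMap.inl ℝ _ _))) := fun s =>
    grad_comp L (fun z => (x s, z, s)) _ (u s)
      ((hasFDerivAt_prodMk_right _ _).comp (u s) (hasFDerivAt_prodMk_left _ _)) (hLd _)
  have hφsplit : ∀ h w, fderiv ℝ φ (x a, x b) (h, w) = ⟪c1, h⟫ + ⟪c2, w⟫ := by
    intro h w
    rw [hc1', hc2', InnerProductSpace.toDual_symm_apply, InnerProductSpace.toDual_symm_apply]
    simp [← map_add]
  have hLsplit : ∀ s w v, fderiv ℝ L (x s, u s, s) (w, v, 0) = ⟪g1 s, w⟫ + ⟪g2 s, v⟫ := by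
    intro s w v
    rw [hg1', hg2', InnerProductSpace.toDual_symm_apply, InnerProductSpace.toDual_symm_apply]
    simp [← map_add]
  -- integrability
  obtain ⟨R1, -, h1⟩ := adm_ae hadm
  obtain ⟨R2, h2⟩ := traj_bdd hα0 hadm y
  have hkint : Integrable k (volume.restrict (Ioc a b)) := by
    have := kern_int hβ a b
    rwa [intervalIntegrable_iff_integrableOn_Ioc_of_le hab.le] at this
  have hint : ∀ c' : EuclideanSpace ℝ (Fin n) →L[ℝ]
      (EuclideanSpace ℝ (Fin n) × EuclideanSpace ℝ (Fin n) × ℝ),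
      IntervalIntegrable (fun s => k s • (InnerProductSpace.toDual ℝ _).symm
        ((fderiv ℝ L (x s, u s, s)).comp c')) volume a b := by
    intro c'
    rw [intervalIntegrable_iff_integrableOn_Ioc_of_le hab.le]
    have hG : Continuous (fun p => (InnerProductSpace.toDual ℝ (EuclideanSpace ℝ (Fin n))).symm
        ((fderiv ℝ L p).comp c')) :=
      (LinearIsometryEquiv.continuous _).comp (hL'.clm_comp continuous_const)
    have hcpt : IsCompact (Metric.closedBall (0 : EuclideanSpace ℝ (Fin n)) R2 ×ˢ
        (Metric.closedBall (0 : EuclideanSpace ℝ (Fin n)) R1 ×ˢ Icc a b)) :=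
      (isCompact_closedBall _ _).prod ((isCompact_closedBall _ _).prod isCompact_Icc)
    obtain ⟨M, hM⟩ := hcpt.exists_bound_of_continuousOn hG.continuousOn
    refine hkint.smul_bdd M (hG.comp_aestronglyMeasurable
      (((traj_meas a α hadm.1 y).measurable.prodMk
        (hadm.1.prodMk measurable_id)).aestronglyMeasurable)) ?_
    filter_upwards [h1 b le_rfl, ae_restrict_mem measurableSet_Ioc] with s hs hm
    refine hM _ ?_
    simp only [mem_prod, Metric.mem_closedBall, dist_zero_right]
    exact ⟨h2 s ⟨hm.1.le, hm.2⟩, hs, hm.1.le, hm.2⟩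
  have hP : IntervalIntegrable (fun s => k s • g1 s) volume a b := by
    simp only [hg1']; exact hint _
  have hQ : IntervalIntegrable (fun s => k s • g2 s) volume a b := by
    simp only [hg2']; exact hint _
  have hvar : ∀ (v : ℝ → EuclideanSpace ℝ (Fin n)) (h : EuclideanSpace ℝ (Fin n)),
      admissible n a b v → ⟪c1, h⟫ + ⟪c2, traj n a α v h b⟫ + ∫ s in a..b,
        (⟪k s • g1 s, traj n a α v h s⟫ + ⟪k s • g2 s, v s⟫) = 0 := by
    intro v h hv
    have := first_variation hab hα0 hβ hφ hL hadm hmin v h hv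
    rw [← hx] at this
    nth_rewrite 1 [← hxa] at this
    rw [hφsplit] at this
    simp only [hLsplit] at this
    rw [← this]
    congr 2
    ext1 s
    rw [real_inner_smul_left, real_inner_smul_left, ← mul_add]
  -- constant variations
  have hsum : c1 + c2 + ∫ s in a..b, k s • g1 s = 0 := by
    refine ext_inner_left ℝ fun e => ?_
    have := hvar (fun _ => 0) e ⟨measurable_const, 0, by simp⟩
    simp only [traj, smul_zero, intervalIntegral.integral_zero, add_zero, inner_zero_right] at this
    have e2 : ∫ s in a..b, ⟪k s • g1 s, e⟫ = ⟪e, ∫ s in a..b, k s • g1 s⟫ := by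
      simp only [real_inner_comm e]
      rw [intervalIntegral.integral_of_le hab.le, intervalIntegral.integral_of_le hab.le]
      rw [intervalIntegrable_iff_integrableOn_Ioc_of_le hab.le] at hP
      exact integral_inner hP e
    rw [e2, real_inner_comm e, real_inner_comm e] at this
    rw [inner_zero_right, inner_add_right, inner_add_right]
    exact this
  have heul := euler_eq hab hα0 c2 _ _ hP hQ (fun v hv => by
    have := hvar v 0 hv
    rwa [inner_zero_right, zero_add] at this)
  refine ⟨fun t => -c2 - ∫ s in t..b, k s • g1 s, fun s => k s • g1 s, hP, ?_, ?_, ?_, ?_, ?_⟩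
  · intro t ht
    have hsub : ∀ p ∈ Icc a b, ∀ q ∈ Icc a b,
        IntervalIntegrable (fun s => k s • g1 s) volume p q := by
      intro p hp q hq
      refine hP.mono_set ?_
      rw [uIcc_of_le hab.le]
      exact uIcc_subset_Icc hp hq
    have := intervalIntegral.integral_add_adjacent_intervals
      (hsub a ⟨le_rfl, hab.le⟩ t ht) (hsub t ht b ⟨hab.le, le_rfl⟩)
    simp only
    rw [← this]
    abel
  · intro hα
    rw [← restrict_Ico_eq_restrict_Icc]
    refine (ae_restrict_iff' measurableSet_Ico).2 (Filter.Eventually.of_forall fun t ht => ?_)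
    beta_reduce
    rw [← abel_inv hα0 hα c2 _ _ hP heul ht]
    simp only [smul_smul]
    rfl
  · rintro rfl
    rw [← restrict_Ioc_eq_restrict_Icc]
    filter_upwards [heul] with t ht
    simp only [sub_self, Real.rpow_zero, Real.Gamma_one, div_one, one_smul] at ht
    exact ht.symm
  · simp only
    rw [← sub_eq_zero, ← neg_eq_zero, ← hsum]
    abel
  · simp
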